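/- There are exactly 2 conjugacy classes of torsion-free subgroups of PSL(2,ℤ) of index 6 and genus zero. -/

import Mathlib

open Matrix

/-- `SL(2,ℤ)`: the group of 2×2 integer matrices of determinant 1. -/
abbrev SL2Z := Matrix.SpecialLinearGroup (Fin 2) ℤ

instance : Fact (Even (Fintype.card (Fin 2))) := ⟨by simp⟩

/-- The subgroup `{±I}` of `SL(2,ℤ)`. -/
def pmOne : Subgroup SL2Z := Subgroup.zpowers (-1 : SL2Z)

instance : pmOne.Normal := by
  constructor
  intro x hx g
  obtain ⟨n, rfl⟩ := hx
  have h : Commute ((-1 : SL2Z) ^ n) g := (Commute.neg_one_left g).zpow_left n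
  refine ⟨n, ?_⟩
  rw [← h.eq, mul_assoc, mul_inv_cancel, mul_one]

/-- `PSL(2,ℤ)`, the modular group, as the quotient of `SL(2,ℤ)` by `{±I}`. -/
abbrev PSL2Z := SL2Z ⧸ pmOne

/-- The natural projection `ξ : SL(2,ℤ) → PSL(2,ℤ)`. -/
def xi : SL2Z →* PSL2Z := QuotientGroup.mk' pmOne

/-- The element `S` of `PSL(2,ℤ)`, the image of `[[0,-1],[1,0]]`. -/
def Sp : PSL2Z := xi ⟨!![0, -1; 1, 0], by norm_num [Matrix.det_fin_two_of]⟩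

/-- The element `T` of `PSL(2,ℤ)`, the image of `[[1,1],[0,1]]`. -/
def Tp : PSL2Z := xi ⟨!![1, 1; 0, 1], by norm_num [Matrix.det_fin_two_of]⟩

/-- The number of left cosets in `PSL(2,ℤ)/Γ` fixed by `g` (for the
left-multiplication action).  For `g = S` this is `e₂(Γ)`, for `g = S*T` it is `e₃(Γ)`. -/
noncomputable def nFix (g : PSL2Z) (Γ : Subgroup PSL2Z) : ℕ :=
  Nat.card {x : PSL2Z ⧸ Γ // g • x = x}

/-- The number of orbits of the cyclic subgroup generated by `g` on `PSL(2,ℤ)/Γ`.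
For `g = S, S*T, T` these are `c₂(Γ), c₃(Γ), h(Γ)` respectively. -/
noncomputable def nOrb (g : PSL2Z) (Γ : Subgroup PSL2Z) : ℕ :=
  Nat.card (MulAction.orbitRel.Quotient (Subgroup.zpowers g) (PSL2Z ⧸ Γ))

/-- `Γ` has genus zero: `c₂(Γ) + c₃(Γ) + h(Γ) = index(Γ) + 2`. -/
def GenusZero (Γ : Subgroup PSL2Z) : Prop :=
  nOrb Sp Γ + nOrb (Sp * Tp) Γ + nOrb Tp Γ = Γ.index + 2

/-- `Γ` is torsion free: it contains no nontrivial element of finite order. -/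
def TorsionFree (Γ : Subgroup PSL2Z) : Prop :=
  ∀ x ∈ Γ, x ≠ 1 → ¬ IsOfFinOrder x

/-- Two subgroups of a group are conjugate. -/
def SubgroupConj {G : Type*} [Group G] (H K : Subgroup G) : Prop :=
  ∃ g : G, Subgroup.map (MulAut.conj g).toMonoidHom H = K

/-- The number of conjugacy classes of subgroups of `PSL(2,ℤ)` satisfying `P`. -/
noncomputable def countClasses (P : Subgroup PSL2Z → Prop) : ℕ :=
  Nat.card (Quot fun A B : {Γ : Subgroup PSL2Z // P Γ} => SubgroupConj A.1 B.1)

/-- The index of the torsion free subgroup `Γ^tf` associated to `Γ`: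
`index(Γ) + 3·e₂(Γ) + 2·e₃(Γ)`. -/
noncomputable def tfIdx (Γ : Subgroup PSL2Z) : ℕ :=
  Γ.index + 3 * nFix Sp Γ + 2 * nFix (Sp * Tp) Γ

/-!
A subgroup `Γ` of `PSL(2,ℤ)` is determined up to conjugacy by the permutations `(σ, ρ)` that `S`
and `ST` induce on its cosets, considered up to relabelling. If `Γ` is torsion-free of index `6`,
then `σ` is a fixed-point-free involution and `ρ` consists of two `3`-cycles: the cosets are the
vertices of two oriented triangles, glued along `σ`. Transitivity forces `σ` to join the two
triangles, which leaves three gluings: one joining edge, or three of them respecting or reversing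
the orientations. The cycle types of `σρ`, which describes `T`, are then `(4, 1, 1)`, `(6)` and
`(2, 2, 2)`, so that genus zero excludes exactly the second gluing.

The other two are realised by `Γ₀(4)` and `Γ(2)`. These are torsion-free because their elements
have trace congruent to `2` modulo `4`: a matrix of determinant `1` whose trace `t` satisfies
`|t| ≥ 2` has powers `Mⁿ = Uₙ₋₁(t / 2) M - Uₙ₋₂(t / 2)`, with `U` the Chebyshev polynomials of the
second kind, and `Uₙ₋₁(t / 2) ≠ 0`, so `Mⁿ = ±1` only if `M` is central.
-/

open MulAction Polynomial.Chebyshev CongruenceSubgroup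
open scoped MatrixGroups

/-! ### Group actions -/

section GroupActions

variable {G X Y : Type*} [Group G] [MulAction G X] [MulAction G Y]

lemma smul_comm_of_closure_eq_top {t : Set G} (ht : Subgroup.closure t = ⊤) (e : X ≃ Y)
    (h : ∀ g ∈ t, ∀ x, e (g • x) = g • e x) (g : G) (x : X) : e (g • x) = g • e x := by
  have hcomp : e.permCongrHom.toMonoidHom.comp (toPermHom G X) = toPermHom G Y := by
    refine MonoidHom.eq_of_eqOn_dense ht fun g hg => Equiv.ext fun y => ?_
    simp [h g hg]
  simpa using DFunLike.congr_fun (DFunLike.congr_fun hcomp g) (e x)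

lemma subgroupConj_of_equivariant_equiv {H K : Subgroup G} (e : G ⧸ H ≃ G ⧸ K)
    (he : ∀ (g : G) (x : G ⧸ H), e (g • x) = g • e x) : SubgroupConj H K := by
  obtain ⟨g, hg⟩ := exists_smul_eq G (e (1 : G)) ((1 : G) : G ⧸ K)
  have hstab : stabilizer G (e (1 : G)) = H := by
    ext a
    rw [mem_stabilizer_iff, ← he, e.apply_eq_iff_eq, ← mem_stabilizer_iff, stabilizer_quotient]
  refine ⟨g, ?_⟩
  rw [← stabilizer_quotient K, ← hg, stabilizer_smul_eq_stabilizer_map_conj, hstab]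

lemma subgroupConj_equivalence : Equivalence (SubgroupConj (G := G)) where
  refl H := ⟨1, by ext; simp⟩
  symm := by
    rintro H _ ⟨g, rfl⟩
    exact ⟨g⁻¹, by ext; simp [Subgroup.map_map, Subgroup.mem_map, mul_assoc]⟩
  trans := by
    rintro H _ _ ⟨g, rfl⟩ ⟨k, rfl⟩
    exact ⟨k * g, by ext; simp [Subgroup.map_map]⟩

lemma exists_smul_notMem_orbit_zpowers [IsPretransitive G X] {s r : G}
    (hsr : Subgroup.closure {s, r} = ⊤) (hr : ¬ IsPretransitive (Subgroup.zpowers r) X) :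
    ∃ x : X, s • x ∉ orbit (Subgroup.zpowers r) x := by
  by_contra! hs
  have horbit (g : G) : ∀ x : X, g • x ∈ orbit (Subgroup.zpowers r) x := by
    induction (hsr ▸ Subgroup.mem_top g : g ∈ Subgroup.closure {s, r})
      using Subgroup.closure_induction with
    | mem g hg =>
      rcases hg with rfl | rfl
      · exact hs
      · exact fun x => ⟨⟨g, Subgroup.mem_zpowers g⟩, rfl⟩
    | one => simp
    | mul a b _ _ ha hb =>
      intro x
      rw [mul_smul, ← orbit_eq_iff.mpr (hb x)]
      exact ha _
    | inv a _ ha =>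
      intro x
      simpa using mem_orbit_symm.mp (ha (a⁻¹ • x))
  refine hr ⟨fun x y => ?_⟩
  obtain ⟨g, rfl⟩ := exists_smul_eq G x y
  exact horbit g x

lemma not_isPretransitive_zpowers_of_pow_eq_one {r : G} {n : ℕ} (hn : n ≠ 0) (hr : r ^ n = 1)
    (hX : n < Nat.card X) : ¬ IsPretransitive (Subgroup.zpowers r) X := by
  intro _
  obtain ⟨⟨x⟩, _⟩ := Nat.card_pos_iff.mp (pos_of_gt hX)
  have hdvd : Nat.card X ∣ n := by
    rw [← index_stabilizer_of_transitive (Subgroup.zpowers r) x]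
    exact (Subgroup.index_dvd_card _).trans (Nat.card_zpowers r ▸ orderOf_dvd_of_pow_eq_one hr)
  exact hX.not_ge (Nat.le_of_dvd (Nat.pos_of_ne_zero hn) hdvd)

lemma exists_equiv_prod_zmod {ι : Type*} {p : ℕ} [Fact p.Prime] {r : G} (hr : r ^ p = 1)
    (hfree : ∀ x : X, r • x ≠ x) (x : ι → X)
    (hx : ∀ i j, x i ∈ orbit (Subgroup.zpowers r) (x j) → i = j)
    (hcard : Nat.card X = Nat.card ι * p) (hX : Nat.card X ≠ 0) :
    ∃ e : ι × ZMod p ≃ X, (∀ i, e (i, 0) = x i) ∧ ∀ i k, r • e (i, k) = e (i, k + 1) := by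
  let f (j : ι × ZMod p) : X := r ^ j.2.val • x j.1
  have hmem (j : ι × ZMod p) : f j ∈ orbit (Subgroup.zpowers r) (x j.1) :=
    ⟨⟨r ^ j.2.val, pow_mem (Subgroup.mem_zpowers r) _⟩, rfl⟩
  have hperiod (y : X) : Function.minimalPeriod (r • ·) y = p :=
    Function.minimalPeriod_eq_prime
      (by simp [Function.IsPeriodicPt, Function.IsFixedPt, smul_iterate, hr]) (hfree y)
  have hinj : Function.Injective f := by
    rintro ⟨i, k⟩ ⟨j, l⟩ h
    obtain rfl : i = j := hx i j <| by
      rw [← orbit_eq_iff, ← orbit_eq_iff.mpr (hmem (i, k)), h]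
      exact orbit_eq_iff.mpr (hmem (j, l))
    have hval : k.val = l.val :=
      Function.iterate_injOn_Iio_minimalPeriod (f := (r • ·)) (x := x i)
        (by simpa [hperiod] using k.val_lt) (by simpa [hperiod] using l.val_lt)
        (by simpa [f, smul_iterate] using h)
    rw [ZMod.val_injective p hval]
  have : Finite X := Nat.finite_of_card_ne_zero hX
  have hbij : Function.Bijective f :=
    (Nat.bijective_iff_injective_and_card f).mpr ⟨hinj, by simp [hcard]⟩
  refine ⟨Equiv.ofBijective f hbij, fun i => by simp [f], fun i k => ?_⟩
  change r • r ^ k.val • x i = r ^ (k + 1).val • x i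
  rw [smul_smul, ← pow_succ', ZMod.val_add, ZMod.val_one, ← pow_eq_pow_mod _ hr]

lemma toPermHom_eq_permCongrHom {ι : Type*} (e : ι ≃ X) {g : G} {σ : Equiv.Perm ι}
    (h : ∀ j, g • e j = e (σ j)) : toPermHom G X g = e.permCongrHom σ := by
  ext x
  obtain ⟨j, rfl⟩ := e.surjective x
  simp [h]

lemma card_orbitRel_quotient_zpowers {ι : Type*} (e : ι ≃ X) {g : G} {σ : Equiv.Perm ι}
    (h : ∀ j, g • e j = e (σ j)) :
    Nat.card (orbitRel.Quotient (Subgroup.zpowers g) X) =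
      Nat.card (Quotient (Equiv.Perm.SameCycle.setoid σ)) := by
  have hzpow (n : ℤ) (j : ι) : g ^ n • e j = e ((σ ^ n) j) := by
    have hgn : toPermHom G X (g ^ n) = e.permCongrHom (σ ^ n) := by
      rw [map_zpow, map_zpow, toPermHom_eq_permCongrHom e h]
    simpa using DFunLike.congr_fun hgn (e j)
  refine (Nat.card_congr (Quotient.congr e fun a b => ?_)).symm
  change Equiv.Perm.SameCycle σ a b ↔ e a ∈ orbit _ (e b)
  rw [Equiv.Perm.sameCycle_comm]
  constructor
  · rintro ⟨n, rfl⟩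
    exact ⟨⟨g ^ n, n, rfl⟩, hzpow n b⟩
  · rintro ⟨⟨_, n, rfl⟩, hn⟩
    exact ⟨n, e.injective ((hzpow n b).symm.trans hn)⟩

end GroupActions

/-! ### Elements of finite order -/

section Chebyshev

variable {R A : Type*} [CommRing R] [Ring A] [Algebra R A]

lemma pow_succ_eq_chebyshev_S {x : A} {t : R} (hx : x * x = t • x - 1) (n : ℕ) :
    x ^ (n + 1) = (S R n).eval t • x - (S R (n - 1)).eval t • (1 : A) := by
  induction n with
  | zero => simp
  | succ n ih =>
    rw [pow_succ, ih, Nat.cast_succ, add_sub_cancel_right, S_add_one, sub_mul, smul_mul_assoc, hx]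
    simp only [Polynomial.eval_sub, Polynomial.eval_mul, Polynomial.eval_X, smul_mul_assoc,
      one_mul]
    module

variable [LinearOrder R] [IsStrictOrderedRing R]

lemma abs_eval_chebyshev_S_sub_one_lt {t : R} (ht : 2 ≤ |t|) (n : ℕ) :
    |(S R (n - 1)).eval t| < |(S R n).eval t| := by
  induction n with
  | zero => simp
  | succ n ih =>
    rw [Nat.cast_succ, add_sub_cancel_right, S_add_one, Polynomial.eval_sub, Polynomial.eval_mul,
      Polynomial.eval_X]
    calc |(S R n).eval t| < 2 * |(S R n).eval t| - |(S R (n - 1)).eval t| := by linarith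
      _ ≤ |t * (S R n).eval t| - |(S R (n - 1)).eval t| := by
        rw [abs_mul]
        gcongr
      _ ≤ |t * (S R n).eval t - (S R (n - 1)).eval t| := abs_sub_abs_le_abs_sub _ _

lemma commute_of_commute_pow [Module.IsTorsionFree R A] {x y : A} {t : R}
    (hx : x * x = t • x - 1) (ht : 2 ≤ |t|) {n : ℕ} (hn : n ≠ 0) (h : Commute (x ^ n) y) :
    Commute x y := by
  obtain ⟨m, rfl⟩ := Nat.exists_eq_succ_of_ne_zero hn
  have hS : (S R m).eval t ≠ 0 :=
    abs_pos.mp ((abs_nonneg _).trans_lt (abs_eval_chebyshev_S_sub_one_lt ht m))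
  rw [Nat.succ_eq_add_one, pow_succ_eq_chebyshev_S hx m] at h
  have hsmul : Commute ((S R m).eval t • x) y := by
    simpa using h.add_left ((Commute.one_left y).smul_left ((S R (m - 1)).eval t))
  refine smul_right_injective A hS ?_
  simpa only [Commute, SemiconjBy, smul_mul_assoc, mul_smul_comm] using hsmul

lemma mem_center_of_pow_mem_center {M : SL(2, R)} (hM : 2 ≤ |M.1.trace|) {n : ℕ} (hn : n ≠ 0)
    (h : M ^ n ∈ Subgroup.center SL(2, R)) : M ∈ Subgroup.center SL(2, R) := by
  have hsq : M.1 * M.1 = M.1.trace • M.1 - 1 := by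
    have hch : M.1 * M.1 - M.1.trace • M.1 + 1 = 0 := by
      simpa [Matrix.charpoly_fin_two, M.det_coe, sq, Algebra.smul_def] using
        M.1.aeval_self_charpoly
    rw [eq_sub_iff_add_eq, ← sub_eq_zero, ← hch]
    abel
  rw [Subgroup.mem_center_iff] at h ⊢
  intro N
  have hpow : Commute (M.1 ^ n) N.1 := by
    simpa [Commute, SemiconjBy] using congrArg Subtype.val (h N).symm
  exact Subtype.ext (commute_of_commute_pow hsq hM hn hpow).symm

end Chebyshev

/-! ### The modular group -/

lemma mem_pmOne_iff {A : SL2Z} : A ∈ pmOne ↔ A = 1 ∨ A = -1 := by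
  constructor
  · rintro ⟨n, rfl⟩
    exact (Int.even_or_odd n).imp Even.neg_one_zpow Odd.neg_one_zpow
  · rintro (rfl | rfl)
    · exact one_mem _
    · exact Subgroup.mem_zpowers _

lemma pmOne_eq_center : pmOne = Subgroup.center SL2Z := by
  ext A
  rw [mem_pmOne_iff, Matrix.SpecialLinearGroup.mem_center_iff]
  constructor
  · rintro (rfl | rfl)
    · exact ⟨1, by simp⟩
    · exact ⟨-1, by simp⟩
  · rintro ⟨a, ha, hA⟩
    rw [Fintype.card_fin, sq_eq_one_iff] at ha
    exact ha.imp (fun h => Subtype.ext (by simp [← hA, h])) fun h => Subtype.ext (by simp [← hA, h])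

lemma xi_surjective : Function.Surjective xi := QuotientGroup.mk'_surjective _

lemma ker_xi : xi.ker = pmOne := QuotientGroup.ker_mk' pmOne

lemma xi_eq_one_iff {A : SL2Z} : xi A = 1 ↔ A = 1 ∨ A = -1 := by
  rw [← MonoidHom.mem_ker, ker_xi, mem_pmOne_iff]

lemma Sp_eq_xi_S : Sp = xi ModularGroup.S := rfl

lemma Tp_eq_xi_T : Tp = xi ModularGroup.T := rfl

lemma Sp_sq : Sp ^ 2 = 1 := by
  rw [Sp_eq_xi_S, ← map_pow, xi_eq_one_iff]
  decide

lemma Sp_mul_Tp_cube : (Sp * Tp) ^ 3 = 1 := by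
  rw [Sp_eq_xi_S, Tp_eq_xi_T, ← map_mul, ← map_pow, xi_eq_one_iff]
  decide

lemma Sp_ne_one : Sp ≠ 1 := by
  rw [Sp_eq_xi_S, Ne, xi_eq_one_iff]
  decide

lemma Sp_mul_Tp_ne_one : Sp * Tp ≠ 1 := by
  rw [Sp_eq_xi_S, Tp_eq_xi_T, ← map_mul, Ne, xi_eq_one_iff]
  decide

lemma Tp_eq_Sp_mul_Sp_mul_Tp : Tp = Sp * (Sp * Tp) := by
  rw [← mul_assoc, ← sq, Sp_sq, one_mul]

lemma closure_Sp_Sp_mul_Tp : Subgroup.closure {Sp, Sp * Tp} = (⊤ : Subgroup PSL2Z) := by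
  have hST : Subgroup.closure {Sp, Tp} = (⊤ : Subgroup PSL2Z) := by
    rw [← Subgroup.map_top_of_surjective xi xi_surjective,
      ← SpecialLinearGroup.SL2Z_generators, MonoidHom.map_closure, Set.image_pair]
    rfl
  have hS : Sp ∈ Subgroup.closure {Sp, Sp * Tp} := Subgroup.subset_closure (by simp)
  have hR : Sp * Tp ∈ Subgroup.closure {Sp, Sp * Tp} := Subgroup.subset_closure (by simp)
  rw [eq_top_iff, ← hST, Subgroup.closure_le]
  rintro x (rfl | rfl)
  · exact hS
  · have hSSR := mul_mem hS hR
    rwa [← Tp_eq_Sp_mul_Sp_mul_Tp] at hSSR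

lemma TorsionFree.smul_ne {Γ : Subgroup PSL2Z} (h : TorsionFree Γ) {g : PSL2Z} (hg : g ≠ 1)
    (hfin : IsOfFinOrder g) (x : PSL2Z ⧸ Γ) : g • x ≠ x := by
  obtain ⟨a, rfl⟩ := QuotientGroup.mk_surjective x
  intro hx
  have hmem : a⁻¹ * g * a ∈ Γ := by
    rw [mul_assoc]
    exact QuotientGroup.eq.mp hx.symm
  have hconj : a⁻¹ * g * a = MulAut.conj a⁻¹ g := by simp
  rw [hconj] at hmem
  refine h _ hmem ?_ ?_
  · rwa [Ne, EmbeddingLike.map_eq_one_iff]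
  · exact (MulAut.conj a⁻¹).toMonoidHom.isOfFinOrder hfin

/-! ### Monodromy of the coset action -/

/-- `Γ` has monodromy `(σ, ρ)` if its cosets can be labelled by `ι` so that `S` acts as `σ` and
`ST` acts as `ρ`. -/
def HasMonodromy {ι : Type*} (σ ρ : Equiv.Perm ι) (Γ : Subgroup PSL2Z) : Prop :=
  ∃ e : ι ≃ PSL2Z ⧸ Γ, (∀ j, Sp • e j = e (σ j)) ∧ ∀ j, (Sp * Tp) • e j = e (ρ j)

/-- The number of cycles of a permutation, fixed points included. -/
noncomputable def cycleCount {ι : Type*} (σ : Equiv.Perm ι) : ℕ :=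
  Nat.card (Quotient (Equiv.Perm.SameCycle.setoid σ))

section Monodromy

variable {ι : Type*} {σ ρ : Equiv.Perm ι} {Γ Δ : Subgroup PSL2Z}

lemma Tp_smul_of_monodromy {e : ι ≃ PSL2Z ⧸ Γ} (hS : ∀ j, Sp • e j = e (σ j))
    (hR : ∀ j, (Sp * Tp) • e j = e (ρ j)) (j : ι) : Tp • e j = e ((σ * ρ) j) := by
  rw [Tp_eq_Sp_mul_Sp_mul_Tp, mul_smul, hR, hS, Equiv.Perm.mul_apply]

lemma HasMonodromy.subgroupConj (h : HasMonodromy σ ρ Γ) (h' : HasMonodromy σ ρ Δ) :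
    SubgroupConj Γ Δ := by
  obtain ⟨e, hS, hR⟩ := h
  obtain ⟨f, hS', hR'⟩ := h'
  refine subgroupConj_of_equivariant_equiv (e.symm.trans f)
    (smul_comm_of_closure_eq_top closure_Sp_Sp_mul_Tp _ ?_)
  rintro g (rfl | rfl) x <;> obtain ⟨j, rfl⟩ := e.surjective x
  · simp [hS, hS']
  · simp [hR, hR']

lemma nOrb_eq_cycleCount (e : ι ≃ PSL2Z ⧸ Γ) {g : PSL2Z} (h : ∀ j, g • e j = e (σ j)) :
    nOrb g Γ = cycleCount σ :=
  card_orbitRel_quotient_zpowers e h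

lemma HasMonodromy.genusZero_iff (h : HasMonodromy σ ρ Γ) :
    GenusZero Γ ↔ cycleCount σ + cycleCount ρ + cycleCount (σ * ρ) = Nat.card ι + 2 := by
  obtain ⟨e, hS, hR⟩ := h
  have hT := Tp_smul_of_monodromy hS hR
  rw [GenusZero, nOrb_eq_cycleCount e hS, nOrb_eq_cycleCount e hR, nOrb_eq_cycleCount e hT,
    Nat.card_congr e]
  rfl

lemma HasMonodromy.exists_isFixedPt (h : HasMonodromy σ ρ Γ) (hT : Tp ∈ Γ) :
    ∃ j, (σ * ρ) j = j := by
  obtain ⟨e, hS, hR⟩ := h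
  obtain ⟨j, hj⟩ := e.surjective ((1 : PSL2Z) : PSL2Z ⧸ Γ)
  refine ⟨j, e.injective ?_⟩
  rw [← Tp_smul_of_monodromy hS hR, hj, ← mem_stabilizer_iff, stabilizer_quotient]
  exact hT

lemma HasMonodromy.pow_eq_one [Γ.Normal] (h : HasMonodromy σ ρ Γ) {n : ℕ} (hT : Tp ^ n ∈ Γ) :
    (σ * ρ) ^ n = 1 := by
  obtain ⟨e, hS, hR⟩ := h
  have hker : Tp ^ n ∈ (toPermHom PSL2Z (PSL2Z ⧸ Γ)).ker := by
    rwa [← Subgroup.normalCore_eq_ker, Subgroup.normalCore_eq_self]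
  rw [MonoidHom.mem_ker, map_pow, toPermHom_eq_permCongrHom e (Tp_smul_of_monodromy hS hR),
    ← map_pow] at hker
  exact (map_eq_one_iff _ e.permCongrHom.injective).mp hker

end Monodromy

/-! ### Gluing two triangles -/

/-- The permutation of cycle type `(3, 3)` rotating two disjoint triangles, whose vertices are
labelled by `Bool × ZMod 3`. -/
def triangleRotation : Equiv.Perm (Bool × ZMod 3) :=
  (Equiv.refl Bool).prodCongr (Equiv.addRight 1)

/-- The gluing in which a single edge joins the two triangles, and the other two vertices of each
triangle are matched with one another. -/
def bridgeGluing : Equiv.Perm (Bool × ZMod 3) :=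
  Function.Involutive.toPerm (fun j => (if j.2 = 0 then !j.1 else j.1, -j.2))
    (show ∀ j, _ by decide)

/-- The gluing of two triangles as the bases of a prism, compatibly with their rotations. -/
def parallelGluing : Equiv.Perm (Bool × ZMod 3) :=
  Function.Involutive.toPerm (fun j => (!j.1, j.2)) (show ∀ j, _ by decide)

/-- The gluing of two triangles as the bases of a prism, reversing their rotations. -/
def antiparallelGluing : Equiv.Perm (Bool × ZMod 3) :=
  Function.Involutive.toPerm (fun j => (!j.1, -j.2)) (show ∀ j, _ by decide)

lemma eq_gluing_of_involutive {σ : Equiv.Perm (Bool × ZMod 3)} (hσ : σ ^ 2 = 1)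
    (hfree : ∀ j, σ j ≠ j) (hbridge : σ (false, 0) = (true, 0)) :
    σ = bridgeGluing ∨ σ = parallelGluing ∨ σ = antiparallelGluing := by
  -- The four remaining vertices have exactly three perfect matchings.
  revert σ
  decide +kernel

instance (σ : Equiv.Perm (Bool × ZMod 3)) :
    Fintype (Quotient (Equiv.Perm.SameCycle.setoid σ)) :=
  @Quotient.fintype _ _ _ (inferInstanceAs (DecidableRel σ.SameCycle))

lemma hasMonodromy_gluing_of_index_eq_six {Γ : Subgroup PSL2Z} (hi : Γ.index = 6)
    (ht : TorsionFree Γ) :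
    HasMonodromy bridgeGluing triangleRotation Γ ∨ HasMonodromy parallelGluing triangleRotation Γ ∨
      HasMonodromy antiparallelGluing triangleRotation Γ := by
  have hcard : Nat.card (PSL2Z ⧸ Γ) = 6 := hi
  have hSfree := ht.smul_ne Sp_ne_one (isOfFinOrder_iff_pow_eq_one.mpr ⟨2, by simp, Sp_sq⟩)
  have hRfree := ht.smul_ne Sp_mul_Tp_ne_one
    (isOfFinOrder_iff_pow_eq_one.mpr ⟨3, by simp, Sp_mul_Tp_cube⟩)
  obtain ⟨x, hx⟩ := exists_smul_notMem_orbit_zpowers (X := PSL2Z ⧸ Γ) closure_Sp_Sp_mul_Tp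
    (not_isPretransitive_zpowers_of_pow_eq_one three_ne_zero Sp_mul_Tp_cube (by omega))
  obtain ⟨e, he, hR⟩ := exists_equiv_prod_zmod Sp_mul_Tp_cube hRfree
    (fun b : Bool => cond b (Sp • x) x)
    (by
      rintro (_ | _) (_ | _) h
      · rfl
      · exact absurd (mem_orbit_symm.mp h) hx
      · exact absurd h hx
      · rfl)
    (by simp [hcard]) (by simp [hcard])
  let σ : Equiv.Perm (Bool × ZMod 3) := e.symm.permCongrHom (toPermHom PSL2Z _ Sp)
  have hS (j) : Sp • e j = e (σ j) := by simp [σ]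
  have hmono : HasMonodromy σ triangleRotation Γ := ⟨e, hS, fun j => hR j.1 j.2⟩
  have hσ : σ ^ 2 = 1 := by rw [← map_pow, ← map_pow, Sp_sq, map_one, map_one]
  have hfree (j) : σ j ≠ j := fun h => hSfree (e j) (by rw [hS, h])
  have hbridge : σ (false, 0) = (true, 0) := e.injective (by rw [← hS, he, he]; rfl)
  rcases eq_gluing_of_involutive hσ hfree hbridge with h | h | h <;> rw [h] at hmono <;> tauto

lemma HasMonodromy.genusZero_of_bridgeGluing {Γ : Subgroup PSL2Z}
    (h : HasMonodromy bridgeGluing triangleRotation Γ) : GenusZero Γ := by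
  simp only [h.genusZero_iff, cycleCount, Nat.card_eq_fintype_card]
  decide +kernel

lemma HasMonodromy.genusZero_of_antiparallelGluing {Γ : Subgroup PSL2Z}
    (h : HasMonodromy antiparallelGluing triangleRotation Γ) : GenusZero Γ := by
  simp only [h.genusZero_iff, cycleCount, Nat.card_eq_fintype_card]
  decide +kernel

lemma HasMonodromy.not_genusZero_of_parallelGluing {Γ : Subgroup PSL2Z}
    (h : HasMonodromy parallelGluing triangleRotation Γ) : ¬ GenusZero Γ := by
  simp only [h.genusZero_iff, cycleCount, Nat.card_eq_fintype_card]
  decide +kernel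

/-! ### The subgroups `Γ(2)` and `Γ₀(4)` -/

section Reduction

variable {A R : Type*} [CommRing A] [CommRing R]

lemma mem_range_map_SL2_of_isUnit {f : A →+* R} (hf : Function.Surjective f) {M : SL(2, R)}
    (hM : IsUnit (M 1 0)) : M ∈ (SpecialLinearGroup.map (n := Fin 2) f).range := by
  obtain ⟨u, hu⟩ := hM
  obtain ⟨x, hx⟩ := hf ((M 0 0 - 1) * ↑u⁻¹)
  obtain ⟨y, hy⟩ := hf (M 1 0)
  obtain ⟨z, hz⟩ := hf ((M 1 1 - 1) * ↑u⁻¹)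
  have hdet := M.det_coe
  rw [det_fin_two] at hdet
  have hinv : (↑u⁻¹ : R) * M 1 0 = 1 := by rw [← hu, Units.inv_mul]
  have ha : 1 + f x * M 1 0 = M 0 0 := by
    rw [hx]
    linear_combination (M 0 0 - 1) * hinv
  have hd : M 1 0 * f z + 1 = M 1 1 := by
    rw [hz]
    linear_combination (M 1 1 - 1) * hinv
  have hb : M 0 0 * f z + f x = M 0 1 := by
    rw [hx, hz]
    linear_combination M 0 1 * hinv + ↑u⁻¹ * hdet
  refine ⟨SpecialLinearGroup.transvection zero_ne_one x *
    SpecialLinearGroup.transvection one_ne_zero y *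
      SpecialLinearGroup.transvection zero_ne_one z, ?_⟩
  ext i j
  fin_cases i <;> fin_cases j <;>
    simp [SpecialLinearGroup.transvection_coe, Matrix.mul_apply, Fin.sum_univ_two, ha, hb, hd, hy]

lemma map_SL2_surjective_of_isLocalRing [IsLocalRing R] {f : A →+* R}
    (hf : Function.Surjective f) :
    Function.Surjective (SpecialLinearGroup.map (n := Fin 2) f) := by
  rw [← MonoidHom.range_eq_top, eq_top_iff]
  rintro M -
  by_cases hc : IsUnit (M 1 0)
  · exact mem_range_map_SL2_of_isUnit hf hc
  have ha : IsUnit (M 0 0) := by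
    have hdet : IsUnit (M 0 0 * M 1 1 + -(M 0 1 * M 1 0)) := by
      rw [← sub_eq_add_neg, ← det_fin_two, M.det_coe]
      exact isUnit_one
    rcases IsLocalRing.isUnit_or_isUnit_of_isUnit_add hdet with h | h
    · exact isUnit_of_mul_isUnit_left h
    · exact absurd (isUnit_of_mul_isUnit_right ((IsUnit.neg_iff _).mp h)) hc
  have hrow : SpecialLinearGroup.transvection one_ne_zero 1 ∈
      (SpecialLinearGroup.map (n := Fin 2) f).range :=
    mem_range_map_SL2_of_isUnit hf (by simp [SpecialLinearGroup.transvection_coe])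
  rw [← Subgroup.mul_mem_cancel_left _ hrow]
  refine mem_range_map_SL2_of_isUnit hf ?_
  have hsum : IsUnit ((M 0 0 + M 1 0) + -M 1 0) := by rwa [add_neg_cancel_right]
  have hrowM := (IsLocalRing.isUnit_or_isUnit_of_isUnit_add hsum).resolve_right
    (mt (IsUnit.neg_iff _).mp hc)
  simpa [SpecialLinearGroup.transvection_coe, Matrix.mul_apply, Fin.sum_univ_two] using hrowM

end Reduction

/-- The Borel subgroup of upper triangular matrices in `SL(2, R)`, of which `Γ₀(N)` is the
preimage for `R = ZMod N`. -/
def upperTriangular (R : Type*) [CommRing R] : Subgroup SL(2, R) where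
  carrier := {M | M 1 0 = 0}
  one_mem' := by simp
  mul_mem' {M N} (hM : M 1 0 = 0) (hN : N 1 0 = 0) := by
    simp [Matrix.mul_apply, Fin.sum_univ_two, hM, hN]
  inv_mem' {M} (hM : M 1 0 = 0) := by
    change M⁻¹ 1 0 = 0
    simp [SpecialLinearGroup.SL2_inv_expl, hM]

lemma Gamma0_eq_comap_upperTriangular (N : ℕ) :
    Gamma0 N =
      (upperTriangular (ZMod N)).comap (SpecialLinearGroup.map (Int.castRingHom (ZMod N))) := by
  ext A
  exact Gamma0_mem

lemma index_Gamma_two : (Gamma 2).index = 6 := by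
  rw [Gamma, Subgroup.index_ker, MonoidHom.range_eq_top.mpr
    (map_SL2_surjective_of_isLocalRing ZMod.intCast_surjective), Subgroup.card_top,
    Nat.card_eq_fintype_card]
  decide +kernel

instance : IsLocalRing (ZMod 4) :=
  have : Nontrivial (ZMod 4) := ZMod.nontrivial_iff.mpr (by decide)
  .of_isUnit_or_isUnit_one_sub_self (by decide)

instance (R : Type*) [CommRing R] [DecidableEq R] : DecidablePred (· ∈ upperTriangular R) :=
  fun M => inferInstanceAs (Decidable (M 1 0 = 0))

lemma index_Gamma0_four : (Gamma0 4).index = 6 := by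
  rw [Gamma0_eq_comap_upperTriangular, Subgroup.index_comap_of_surjective _
    (map_SL2_surjective_of_isLocalRing ZMod.intCast_surjective)]
  have hupper : Nat.card (upperTriangular (ZMod 4)) = 8 := by
    rw [Nat.card_eq_fintype_card]
    decide +kernel
  have hSL : Nat.card SL(2, ZMod 4) = 48 := by
    rw [Nat.card_eq_fintype_card]
    decide +kernel
  have hLagrange := (upperTriangular (ZMod 4)).card_mul_index
  rw [hupper, hSL] at hLagrange
  omega

lemma not_isOfFinOrder_xi {A : SL2Z} (hA : 2 ≤ |A.1.trace|) (h1 : xi A ≠ 1) :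
    ¬ IsOfFinOrder (xi A) := by
  rw [isOfFinOrder_iff_pow_eq_one]
  rintro ⟨n, hn, hpow⟩
  rw [← map_pow, ← MonoidHom.mem_ker, ker_xi, pmOne_eq_center] at hpow
  refine h1 ?_
  rw [← MonoidHom.mem_ker, ker_xi, pmOne_eq_center]
  exact mem_center_of_pow_mem_center hA hn.ne' hpow

lemma torsionFree_map_xi {H : Subgroup SL2Z} (hH : ∀ A ∈ H, 2 ≤ |A.1.trace|) :
    TorsionFree (H.map xi) := by
  rintro _ ⟨A, hA, rfl⟩ h1
  exact not_isOfFinOrder_xi (hH A hA) h1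

lemma two_le_abs_trace_of_four_dvd {A : SL2Z} (hA : 4 ∣ A 0 1 * A 1 0) : 2 ≤ |A.1.trace| := by
  have hmod (a d : ZMod 4) (h : a * d = 1) : a + d = 2 := by
    revert a d
    decide
  have hdet : A 0 0 * A 1 1 = 1 + A 0 1 * A 1 0 := by
    linear_combination (det_fin_two A.1).symm.trans A.det_coe
  have htrace : ((A.1.trace : ℤ) : ZMod 4) = (2 : ℤ) := by
    rw [trace_fin_two]
    push_cast
    refine hmod _ _ ?_
    rw [← Int.cast_mul, hdet, Int.cast_add, (ZMod.intCast_zmod_eq_zero_iff_dvd _ 4).mpr hA]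
    simp
  rw [ZMod.intCast_eq_intCast_iff_dvd_sub] at htrace
  rw [le_abs]
  omega

lemma index_map_xi {H : Subgroup SL2Z} (hH : -1 ∈ H) : (H.map xi).index = H.index :=
  Subgroup.index_map_eq H xi_surjective (by rwa [ker_xi, pmOne, Subgroup.zpowers_le])

/-- The image of `Γ(N)` in `PSL(2,ℤ)`. -/
def PGamma (N : ℕ) : Subgroup PSL2Z := (Gamma N).map xi

/-- The image of `Γ₀(N)` in `PSL(2,ℤ)`. -/
def PGamma0 (N : ℕ) : Subgroup PSL2Z := (Gamma0 N).map xi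

instance (N : ℕ) : (PGamma N).Normal := (Gamma_normal N).map _ xi_surjective

lemma index_PGamma_two : (PGamma 2).index = 6 :=
  (index_map_xi (by rw [Gamma_mem]; decide)).trans index_Gamma_two

lemma index_PGamma0_four : (PGamma0 4).index = 6 :=
  (index_map_xi (by rw [Gamma0_mem]; decide)).trans index_Gamma0_four

lemma torsionFree_PGamma_two : TorsionFree (PGamma 2) :=
  torsionFree_map_xi fun _ hA => two_le_abs_trace_of_four_dvd <| by
    obtain ⟨-, hb, hc, -⟩ := Gamma_mem.mp hA
    exact mul_dvd_mul ((ZMod.intCast_zmod_eq_zero_iff_dvd _ 2).mp hb)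
      ((ZMod.intCast_zmod_eq_zero_iff_dvd _ 2).mp hc)

lemma torsionFree_PGamma0_four : TorsionFree (PGamma0 4) :=
  torsionFree_map_xi fun _ hA => two_le_abs_trace_of_four_dvd <|
    ((ZMod.intCast_zmod_eq_zero_iff_dvd _ 4).mp (Gamma0_mem.mp hA)).mul_left _

lemma Tp_pow_mem_PGamma (N : ℕ) : Tp ^ N ∈ PGamma N :=
  ⟨ModularGroup.T ^ N, by simpa using ModularGroup_T_pow_mem_Gamma N N dvd_rfl, by
    rw [map_pow, Tp_eq_xi_T]⟩

lemma Tp_mem_PGamma0 (N : ℕ) : Tp ∈ PGamma0 N :=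
  ⟨ModularGroup.T, Gamma0_mem.mpr (by simp [ModularGroup.T]), Tp_eq_xi_T.symm⟩

lemma hasMonodromy_PGamma_two : HasMonodromy antiparallelGluing triangleRotation (PGamma 2) := by
  rcases hasMonodromy_gluing_of_index_eq_six index_PGamma_two torsionFree_PGamma_two with h | h | h
  · exact absurd (h.pow_eq_one (Tp_pow_mem_PGamma 2)) (by decide +kernel)
  · exact absurd (h.pow_eq_one (Tp_pow_mem_PGamma 2)) (by decide +kernel)
  · exact h

lemma hasMonodromy_PGamma0_four : HasMonodromy bridgeGluing triangleRotation (PGamma0 4) := by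
  rcases hasMonodromy_gluing_of_index_eq_six index_PGamma0_four torsionFree_PGamma0_four
    with h | h | h
  · exact h
  · exact absurd (h.exists_isFixedPt (Tp_mem_PGamma0 4)) (by decide +kernel)
  · exact absurd (h.exists_isFixedPt (Tp_mem_PGamma0 4)) (by decide +kernel)

lemma not_subgroupConj_PGamma_two_PGamma0_four : ¬ SubgroupConj (PGamma 2) (PGamma0 4) := by
  rintro ⟨g, hg⟩
  have hT : Tp ∈ PGamma 2 := by
    rw [← hg.symm.trans (Subgroup.Normal.map_conj_eq (PGamma 2) g)]
    exact Tp_mem_PGamma0 4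
  exact absurd (hasMonodromy_PGamma_two.exists_isFixedPt hT) (by decide +kernel)

/-- There are exactly 2 conjugacy classes of torsion-free genus-zero subgroups of
`PSL(2,ℤ)` of index 6. -/
theorem count_tf_index_six :
    countClasses (fun Γ => Γ.index = 6 ∧ GenusZero Γ ∧ TorsionFree Γ) = 2 := by
  rw [countClasses, Nat.card_eq_two_iff]
  refine ⟨Quot.mk _ ⟨PGamma 2, index_PGamma_two,
      hasMonodromy_PGamma_two.genusZero_of_antiparallelGluing, torsionFree_PGamma_two⟩,
    Quot.mk _ ⟨PGamma0 4, index_PGamma0_four,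
      hasMonodromy_PGamma0_four.genusZero_of_bridgeGluing, torsionFree_PGamma0_four⟩, ?_, ?_⟩
  · rw [Ne, (subgroupConj_equivalence.comap Subtype.val).quot_mk_eq_iff]
    exact not_subgroupConj_PGamma_two_PGamma0_four
  · refine Set.eq_univ_of_forall (Quot.ind ?_)
    rintro ⟨Γ, hi, hg, ht⟩
    rcases hasMonodromy_gluing_of_index_eq_six hi ht with h | h | h
    · exact Or.inr (Quot.sound (h.subgroupConj hasMonodromy_PGamma0_four))
    · exact absurd hg h.not_genusZero_of_parallelGluing
    · exact Or.inl (Quot.sound (h.subgroupConj hasMonodromy_PGamma_two))
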